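/- arXiv:0909.5232 — 2 statements merged into one kernel-verified Lean document; each statement's English description precedes it below -/
import Mathlib

section
/- Let κ be an algebraically closed field of characteristic zero, and let f : X → Y be a proper morphism of integral schemes of finite type over κ which is bijective on the underlying sets of points. Then f is birational: there exists a nonempty open subscheme U ⊆ Y such that the restriction of f to f⁻¹(U) → U is an isomorphism of schemes. -/
open AlgebraicGeometry CategoryTheory

/-!
The product `X ×[Y] X` is a Jacobson space whose closed points are pairs of `κ`-points of `X` with
the same image in `Y`, so they all lie on the diagonal; the diagonal is locally closed, hence is
everything, and `f` is universally injective. The residue field extensions of `f` are then purely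
inseparable, so in characteristic zero `f` induces an isomorphism of function fields. Its inverse
spreads out to a section of `f` over a nonempty open `U ⊆ Y`. By injectivity this section is a
surjective immersion into the reduced scheme `f⁻¹(U)`, hence an isomorphism, and so is `f` over `U`.
-/

universe u

section JacobsonSpace

variable {T : Type*} [TopologicalSpace T] {S : Set T}

lemma isOpen_of_isLocallyClosed_of_dense (hS : IsLocallyClosed S) (hdense : Dense S) :
    IsOpen S := by
  simpa [coborder_eq_union_closure_compl, hdense.closure_eq] using hS.isOpen_coborder

lemma eq_univ_of_isLocallyClosed_of_closedPoints_subset [JacobsonSpace T]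
    (hS : IsLocallyClosed S) (hclosed : closedPoints T ⊆ S) : S = Set.univ := by
  have hdense : Dense S := (dense_iff_closure_eq.mpr closure_closedPoints).mono hclosed
  have hcompl : IsClosed Sᶜ := (isOpen_of_isLocallyClosed_of_dense hS hdense).isClosed_compl
  by_contra hne
  obtain ⟨t, htS, ht⟩ :=
    nonempty_inter_closedPoints (Set.nonempty_compl.mpr hne) hcompl.isLocallyClosed
  exact htS (hclosed ht)

end JacobsonSpace

lemma bijective_of_isPurelyInseparable_of_charZero {F E : Type*} [Field F] [CharZero F] [Field E]
    {φ : F →+* E} (hφ : φ.IsPurelyInseparable) : Function.Bijective φ := by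
  algebraize [φ]
  exact IsPurelyInseparable.bijective_algebraMap_of_isSeparable F E

section UniversallyInjective

variable {X Y : Scheme.{u}} {K : Type u} [Field K] [IsAlgClosed K]

lemma mem_range_diagonal_of_isClosed_of_fst_eq_snd (f : X ⟶ Y) (s : Y ⟶ Spec (.of K))
    [LocallyOfFiniteType (f ≫ s)] {z : ↑(Limits.pullback f f)} (hz : IsClosed {z})
    (hfst : Limits.pullback.fst f f z = Limits.pullback.snd f f z) :
    z ∈ Set.range (Limits.pullback.diagonal f) := by
  have : LocallyOfFiniteType f := locallyOfFiniteType_of_comp f s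
  let p : Spec (.of K) ⟶ Limits.pullback f f :=
    pointOfClosedPoint (Limits.pullback.fst f f ≫ f ≫ s) z hz
  have hp (a) : p a = z := pointOfClosedPoint_apply _ z hz a
  have hp_fst : (p ≫ Limits.pullback.fst f f) ≫ f ≫ s = 𝟙 _ :=
    pointOfClosedPoint_comp (Limits.pullback.fst f f ≫ f ≫ s) z hz
  have hp_snd : (p ≫ Limits.pullback.snd f f) ≫ f ≫ s = 𝟙 _ := by
    rw [← hp_fst, Category.assoc, Category.assoc, Limits.pullback.condition_assoc]
  have hp_apply (a) : (p ≫ Limits.pullback.fst f f) a = (p ≫ Limits.pullback.snd f f) a := by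
    rw [Scheme.Hom.comp_apply, Scheme.Hom.comp_apply, hp, hfst]
  have hp_eq : p ≫ Limits.pullback.fst f f = p ≫ Limits.pullback.snd f f :=
    ext_of_apply_closedPoint_eq (f ≫ s) hp_fst hp_snd (hp_apply _)
  have hp_diagonal : (p ≫ Limits.pullback.fst f f) ≫ Limits.pullback.diagonal f = p :=
    Limits.pullback.hom_ext (by simp) (by simpa using hp_eq)
  let a : Spec (.of K) := IsLocalRing.closedPoint K
  exact ⟨(p ≫ Limits.pullback.fst f f) a, by rw [← Scheme.Hom.comp_apply, hp_diagonal, hp]⟩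

lemma universallyInjective_of_injOn_closedPoints (f : X ⟶ Y) (s : Y ⟶ Spec (.of K))
    [LocallyOfFiniteType (f ≫ s)] (hf : Set.InjOn f (closedPoints X)) :
    UniversallyInjective f := by
  have : LocallyOfFiniteType f := locallyOfFiniteType_of_comp f s
  have : JacobsonSpace X := LocallyOfFiniteType.jacobsonSpace (f ≫ s)
  have : JacobsonSpace ↑(Limits.pullback f f) :=
    LocallyOfFiniteType.jacobsonSpace (Limits.pullback.fst f f)
  rw [UniversallyInjective.iff_diagonal, surjective_iff, ← Set.range_eq_univ]
  refine eq_univ_of_isLocallyClosed_of_closedPoints_subset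
    (Limits.pullback.diagonal f).isLocallyClosed_range fun z hz ↦ ?_
  refine mem_range_diagonal_of_isClosed_of_fst_eq_snd f s hz (hf ?_ ?_ ?_)
  · exact (Limits.pullback.fst f f).closePoints_subset_preimage_closedPoints hz
  · exact (Limits.pullback.snd f f).closePoints_subset_preimage_closedPoints hz
  · rw [← Scheme.Hom.comp_apply, ← Scheme.Hom.comp_apply, Limits.pullback.condition]

end UniversallyInjective

section FunctionField

variable {X Y : Scheme.{u}} (f : X ⟶ Y)

lemma map_genericPoint_of_isDominant [IrreducibleSpace X] [IrreducibleSpace Y] [IsDominant f] :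
    f (genericPoint X) = genericPoint Y := by
  refine ((genericPoint_spec Y).eq ?_).symm
  simpa [f.denseRange.closure_range] using (genericPoint_spec X).image f.continuous

lemma isIso_residue_genericPoint (X : Scheme.{u}) [IsIntegral X] :
    IsIso (X.residue (genericPoint X)) := by
  rw [ConcreteCategory.isIso_iff_bijective]
  exact ⟨RingHom.injective (R := X.functionField) (X.residue (genericPoint X)).hom,
    X.residue_surjective _⟩

lemma charZero_functionField {K : Type u} [Field K] [CharZero K] [IsIntegral Y]
    (s : Y ⟶ Spec (.of K)) : CharZero Y.functionField :=
  charZero_of_injective_ringHom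
    (Spec.preimage (Y.fromSpecStalk (genericPoint Y) ≫ s)).hom.injective

lemma isIso_residueFieldMap_of_universallyInjective [UniversallyInjective f] (x : X)
    [CharZero (Y.residueField (f x))] : IsIso (f.residueFieldMap x) := by
  have hinsep : (f.residueFieldMap x).hom.IsPurelyInseparable := by
    have hradicial := (tfae_universallyInjective f).out 0 2
    exact (hradicial.mp ‹_›).2 x
  rw [ConcreteCategory.isIso_iff_bijective]
  exact bijective_of_isPurelyInseparable_of_charZero hinsep

lemma isIso_stalkMap_genericPoint_of_universallyInjective [IsIntegral X] [IsIntegral Y]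
    [IsDominant f] [UniversallyInjective f] [CharZero Y.functionField] :
    IsIso (f.stalkMap (genericPoint X)) := by
  have hη : f (genericPoint X) = genericPoint Y := map_genericPoint_of_isDominant f
  have : CharZero (Y.residueField (f (genericPoint X))) := by
    rw [hη]
    exact charZero_of_injective_ringHom
      (RingHom.injective (R := Y.functionField) (Y.residue (genericPoint Y)).hom)
  have : IsIso (f.residueFieldMap (genericPoint X)) :=
    isIso_residueFieldMap_of_universallyInjective f _
  have : IsIso (X.residue (genericPoint X)) := isIso_residue_genericPoint X
  have : IsIso (Y.residue (f (genericPoint X))) := hη ▸ isIso_residue_genericPoint Y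
  have : IsIso (f.stalkMap (genericPoint X) ≫ X.residue (genericPoint X)) := by
    rw [← Scheme.residue_residueFieldMap]
    infer_instance
  exact IsIso.of_isIso_comp_right _ (X.residue (genericPoint X))

end FunctionField

section SpreadingOut

variable {X Y : Scheme.{u}} [IsReduced X] (f : X ⟶ Y)

lemma isIso_of_injective_of_section (hf : Function.Injective f) (s : Y ⟶ X)
    (hs : s ≫ f = 𝟙 Y) : IsIso f := by
  have hsurj : Function.Surjective s := fun x ↦
    ⟨f x, hf (by rw [← Scheme.Hom.comp_apply, hs]; rfl)⟩
  have : IsImmersion (s ≫ f) := hs ▸ inferInstance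
  have : IsImmersion s := .of_comp s f
  have : IsClosedImmersion s := .of_isPreimmersion s (hsurj.range_eq ▸ isClosed_univ)
  have : Surjective s := ⟨hsurj⟩
  have : IsIso s := isIso_of_isClosedImmersion_of_surjective s
  have : IsIso (s ≫ f) := hs ▸ inferInstance
  exact IsIso.of_isIso_comp_left s f

lemma exists_isIso_morphismRestrict_of_isIso_stalkMap [LocallyOfFiniteType f]
    (hf : Function.Injective f) (x : X) [Y.IsGermInjectiveAt (f x)] [IsIso (f.stalkMap x)] :
    ∃ U : Y.Opens, f x ∈ U ∧ IsIso (f ∣_ U) := by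
  obtain ⟨U, hxU, s, -, hs⟩ := spread_out_of_isGermInjective (𝟙 Y) f (x := f x) (y := x) rfl
    (inv (f.stalkMap x)) (by simp)
  have hlift : 𝟙 _ ≫ U.ι = s ≫ f := by rw [hs, Category.comp_id, Category.id_comp]
  have hinj : Function.Injective (f ∣_ U) := by
    rw [morphismRestrict_base]
    exact hf.restrictPreimage _
  exact ⟨U, hxU, isIso_of_injective_of_section _ hinj
    ((isPullback_morphismRestrict f U).lift (𝟙 _) s hlift) (IsPullback.lift_fst _ _ _ _)⟩

end SpreadingOut

theorem proper_bijective_birational_general {K : Type u} [Field K] [IsAlgClosed K] [CharZero K]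
    {X Y : Scheme.{u}} [IsIntegral X] [IsIntegral Y] (f : X ⟶ Y) (s : Y ⟶ Spec (.of K))
    [LocallyOfFiniteType (f ≫ s)] [IsDominant f] (hf : Set.InjOn f (closedPoints X)) :
    ∃ U : Y.Opens, U ≠ ⊥ ∧ IsIso (f ∣_ U) := by
  have : LocallyOfFiniteType f := locallyOfFiniteType_of_comp f s
  have : UniversallyInjective f := universallyInjective_of_injOn_closedPoints f s hf
  have : CharZero Y.functionField := charZero_functionField s
  have : IsIso (f.stalkMap (genericPoint X)) :=
    isIso_stalkMap_genericPoint_of_universallyInjective f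
  obtain ⟨U, hηU, hU⟩ :=
    exists_isIso_morphismRestrict_of_isIso_stalkMap f f.injective (genericPoint X)
  exact ⟨U, by rintro rfl; exact hηU, hU⟩

/-- Over an algebraically closed field `κ` of characteristic zero, a proper
morphism `f : X ⟶ Y` of integral schemes of finite type over `κ` which is
bijective on underlying points is birational: there is a nonempty open
`U ⊆ Y` over which `f` restricts to an isomorphism of schemes. -/
theorem proper_bijective_birational
    (κ : Type) [Field κ] [IsAlgClosed κ] [CharZero κ]
    {X Y : Scheme} (f : X ⟶ Y)
    (sX : X ⟶ Spec (CommRingCat.of κ)) (sY : Y ⟶ Spec (CommRingCat.of κ))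
    (hcomp : sX = f ≫ sY)
    [IsIntegral X] [IsIntegral Y]
    [LocallyOfFiniteType sX] [QuasiCompact sX]
    [LocallyOfFiniteType sY] [QuasiCompact sY]
    [IsProper f] (hbij : Function.Bijective f.base) :
    ∃ U : Y.Opens, U ≠ ⊥ ∧ IsIso (f ∣_ U) := by
  subst hcomp
  have : Surjective f := ⟨hbij.2⟩
  exact proper_bijective_birational_general f sY hbij.1.injOn
end

section
/- Let κ be an algebraically closed field and let a₁, …, a_r be r pairwise distinct elements of κ, and set Z = κ ∖ {a₁, …, a_r}. The map sending a multiset m = {c₁, …, c_r} of r elements of Z to the tuple (f_m(a₁), …, f_m(a_r)), where f_m(x) = ∏_{i=1}^{r}(x − c_i), is a bijection from the set of multisets of size r of elements of Z onto (κ ∖ {0})^r. -/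
/-!
The map factors through the monic polynomials of degree `r`. A multiset of roots corresponds to
its monic polynomial because `κ` is algebraically closed. Evaluation at the `r` distinct points
`a i` maps the monic polynomials of degree `r` bijectively onto `κ ^ r`: they form the translate
by `∏ i, (X - a i)`, which vanishes at all the `a i`, of the space of polynomials of degree `< r`,
on which evaluation is inverted by Lagrange interpolation. Finally, `f_m (a i) ≠ 0` says exactly
that `a i` is not in `m`, so the bijection restricts to `Sym^r Z → (κ ∖ {0})^r`.
-/

open Polynomial

section Domain

variable {R : Type*} [CommRing R] [IsDomain R]

theorem multiset_prod_map_sub_ne_zero_iff {m : Multiset R} {x : R} :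
    (m.map fun c => x - c).prod ≠ 0 ↔ x ∉ m := by
  simp [Multiset.prod_eq_zero_iff, sub_eq_zero]

theorem bijOn_multiset_prod_X_sub_C (n : ℕ) :
    Set.BijOn (fun m : Multiset R => (m.map fun c => X - C c).prod)
      {m | m.card = n} {f | f.Monic ∧ f.natDegree = n ∧ f.Splits} := by
  refine Set.InvOn.bijOn (f' := roots) ⟨?leftInv, ?rightInv⟩ ?mapsTo ?roots_mapsTo
  case leftInv => exact fun m _ => roots_multiset_prod_X_sub_C m
  case rightInv => exact fun f ⟨monic, _, splits⟩ => (splits.eq_prod_roots_of_monic monic).symm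
  case mapsTo =>
    exact fun m card_m => ⟨monic_multisetProd_X_sub_C m,
      (natDegree_multiset_prod_X_sub_C_eq_card m).trans card_m,
      .multisetProd (by simp [Splits.X_sub_C])⟩
  case roots_mapsTo =>
    exact fun f ⟨_, natDegree_f, splits⟩ => splits.natDegree_eq_card_roots.symm.trans natDegree_f

theorem eq_of_monic_of_natDegree_eq_card_of_eval_index_eq {ι : Type*} {s : Finset ι} {v : ι → R}
    (hv : Set.InjOn v s) {f g : R[X]} (hf : f.Monic) (hg : g.Monic)
    (natDegree_f : f.natDegree = s.card) (natDegree_g : g.natDegree = s.card)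
    (eval_eq : ∀ i ∈ s, f.eval (v i) = g.eval (v i)) : f = g := by
  have degree_f : f.degree = s.card := by rw [degree_eq_natDegree hf.ne_zero, natDegree_f]
  have degree_g : g.degree = s.card := by rw [degree_eq_natDegree hg.ne_zero, natDegree_g]
  exact eq_of_degree_le_of_eval_index_eq s hv degree_f.le (degree_f.trans degree_g.symm)
    (hf.leadingCoeff.trans hg.leadingCoeff.symm) eval_eq

end Domain

section Field

variable {F ι : Type*} [Field F]

theorem exists_monic_natDegree_eq_card_eval_index_eq {s : Finset ι} {v : ι → F}
    (hv : Set.InjOn v s) (y : ι → F) :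
    ∃ f : F[X], f.Monic ∧ f.natDegree = s.card ∧ ∀ i ∈ s, f.eval (v i) = y i := by
  classical
  have degree_lt : (Lagrange.interpolate s v y).degree < (Lagrange.nodal s v).degree :=
    Lagrange.degree_nodal (R := F) ▸ Lagrange.degree_interpolate_lt y hv
  refine ⟨Lagrange.nodal s v + Lagrange.interpolate s v y,
    Lagrange.nodal_monic.add_of_left degree_lt, ?_, fun i hi => ?_⟩
  · rw [natDegree_add_eq_left_of_degree_lt degree_lt, Lagrange.natDegree_nodal]
  · rw [eval_add, Lagrange.eval_nodal_at_node hi, Lagrange.eval_interpolate_at_node y hv hi,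
      zero_add]

theorem bijOn_eval_monic_natDegree_eq_card [Fintype ι] {v : ι → F} (hv : Function.Injective v) :
    Set.BijOn (fun (f : F[X]) i => f.eval (v i))
      {f | f.Monic ∧ f.natDegree = Fintype.card ι} Set.univ := by
  refine ⟨Set.mapsTo_univ _ _, ?injOn, ?surjOn⟩
  case injOn =>
    rintro f ⟨monic_f, natDegree_f⟩ g ⟨monic_g, natDegree_g⟩ eval_eq
    exact eq_of_monic_of_natDegree_eq_card_of_eval_index_eq (s := Finset.univ) hv.injOn
      monic_f monic_g natDegree_f natDegree_g fun i _ => congrFun eval_eq i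
  case surjOn =>
    intro y _
    obtain ⟨f, monic_f, natDegree_f, eval_f⟩ :=
      exists_monic_natDegree_eq_card_eval_index_eq (s := Finset.univ) hv.injOn y
    exact ⟨f, ⟨monic_f, natDegree_f⟩, funext fun i => eval_f i (Finset.mem_univ i)⟩

theorem bijOn_multiset_prod_map_sub [IsAlgClosed F] [Fintype ι] {v : ι → F}
    (hv : Function.Injective v) :
    Set.BijOn (fun (m : Multiset F) i => (m.map fun c => v i - c).prod)
      {m | m.card = Fintype.card ι} Set.univ := by
  have roots_bijOn : Set.BijOn (fun m : Multiset F => (m.map fun c => X - C c).prod)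
      {m | m.card = Fintype.card ι} {f | f.Monic ∧ f.natDegree = Fintype.card ι} := by
    simpa only [IsAlgClosed.splits, and_true] using
      bijOn_multiset_prod_X_sub_C (R := F) (Fintype.card ι)
  refine ((bijOn_eval_monic_natDegree_eq_card hv).comp roots_bijOn).congr fun m _ => ?_
  simp [eval_multiset_prod]

end Field

/-- Let `κ` be algebraically closed, `a 0, …, a (r-1)` pairwise distinct
elements of `κ`, and `Z = κ ∖ {a 0, …, a (r-1)}`.  The map sending a multiset
`m = {c₁, …, c_r}` of `r` elements of `Z` to the tuple
`(f_m (a 0), …, f_m (a (r-1)))`, where `f_m(x) = ∏ᵢ (x - cᵢ)`, is a bijection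
from the multisets of size `r` of elements of `Z` onto `(κ ∖ {0})^r`. -/
theorem sym_punctured_line_bijOn_torus
    (κ : Type*) [Field κ] [IsAlgClosed κ] (r : ℕ)
    (a : Fin r → κ) (ha : Function.Injective a) :
    Set.BijOn (fun m : Multiset κ => fun i : Fin r => (m.map fun c => a i - c).prod)
      {m : Multiset κ | Multiset.card m = r ∧ ∀ c ∈ m, ∀ i : Fin r, c ≠ a i}
      {v : Fin r → κ | ∀ i, v i ≠ 0} := by
  have sym_bijOn := (bijOn_multiset_prod_map_sub ha).subset_right
    (Set.subset_univ {v : Fin r → κ | ∀ i, v i ≠ 0})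
  convert sym_bijOn using 1
  ext m
  have avoids_iff : (∀ c ∈ m, ∀ i, c ≠ a i) ↔ ∀ i, a i ∉ m :=
    ⟨fun h i hi => h (a i) hi i rfl, fun h c hc i hci => h i (hci ▸ hc)⟩
  simp only [Set.mem_inter_iff, Set.mem_preimage, Set.mem_ofPred_eq, Fintype.card_fin,
    multiset_prod_map_sub_ne_zero_iff, avoids_iff]
end
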